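/- Every permutation π avoiding the decreasing pattern ℓ⋯21 (ℓ ≥ 2) has substitution depth at most 2ℓ−3, where substitution depth is the height of the substitution decomposition tree of π. -/

import Mathlib

def Contains {k n : ℕ} (σ : Equiv.Perm (Fin k)) (π : Equiv.Perm (Fin n)) : Prop :=
  ∃ f : Fin k → Fin n, StrictMono f ∧ ∀ i j : Fin k, σ i < σ j ↔ π (f i) < π (f j)

abbrev PermOf := Σ n : ℕ, Equiv.Perm (Fin n)

def sumPerm {m n : ℕ} (σ : Equiv.Perm (Fin m)) (τ : Equiv.Perm (Fin n)) :
    Equiv.Perm (Fin (m + n)) :=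
  finSumFinEquiv.symm.trans ((Equiv.sumCongr σ τ).trans finSumFinEquiv)

/-- The skew sum of two permutations. -/
def skewPerm {m n : ℕ} (σ : Equiv.Perm (Fin m)) (τ : Equiv.Perm (Fin n)) :
    Equiv.Perm (Fin (m + n)) :=
  finSumFinEquiv.symm.trans ((Equiv.sumCongr σ τ).trans
    ((Equiv.sumComm (Fin m) (Fin n)).trans (finSumFinEquiv.trans (finCongr (Nat.add_comm n m)))))

def psum (σ τ : PermOf) : PermOf := ⟨σ.1 + τ.1, sumPerm σ.2 τ.2⟩

def pskew (σ τ : PermOf) : PermOf := ⟨σ.1 + τ.1, skewPerm σ.2 τ.2⟩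

/-- The empty permutation. -/
def pempty : PermOf := ⟨0, 1⟩

def psumList (L : List PermOf) : PermOf := L.foldr psum pempty

def pskewList (L : List PermOf) : PermOf := L.foldr pskew pempty

def SumDecomposable (π : PermOf) : Prop :=
  ∃ σ τ : PermOf, 0 < σ.1 ∧ 0 < τ.1 ∧ π = psum σ τ

def SumIndecomposable (π : PermOf) : Prop := 0 < π.1 ∧ ¬ SumDecomposable π

def SkewDecomposable (π : PermOf) : Prop :=
  ∃ σ τ : PermOf, 0 < σ.1 ∧ 0 < τ.1 ∧ π = pskew σ τ

def SkewIndecomposable (π : PermOf) : Prop := 0 < π.1 ∧ ¬ SkewDecomposable π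

def Contiguous {n : ℕ} (S : Finset (Fin n)) : Prop :=
  ∀ i j k : Fin n, i ∈ S → k ∈ S → i ≤ j → j ≤ k → j ∈ S

def IsPermInterval {n : ℕ} (π : Equiv.Perm (Fin n)) (S : Finset (Fin n)) : Prop :=
  Contiguous S ∧ Contiguous (S.image π)

def IsSimple {n : ℕ} (π : Equiv.Perm (Fin n)) : Prop :=
  ∀ S : Finset (Fin n), IsPermInterval π S → S.card = 0 ∨ S.card = 1 ∨ S.card = n

/-- A monotone (increasing or decreasing) permutation. -/
def IsMonotonePerm {n : ℕ} (σ : Equiv.Perm (Fin n)) : Prop :=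
  (∀ i j : Fin n, i ≤ j → σ i ≤ σ j) ∨ (∀ i j : Fin n, i ≤ j → σ j ≤ σ i)

def IsInflation {n m : ℕ} (π : Equiv.Perm (Fin n)) (σ : Equiv.Perm (Fin m))
    (k : Fin m → ℕ) (α : ∀ i, Equiv.Perm (Fin (k i))) : Prop :=
  ∃ e : (Σ i : Fin m, Fin (k i)) ≃ Fin n,
    (∀ p q : Σ i : Fin m, Fin (k i),
      e p < e q ↔ (p.1 < q.1 ∨ ∃ _ : p.1 = q.1, (p.2 : ℕ) < (q.2 : ℕ))) ∧
    (∀ p q : Σ i : Fin m, Fin (k i),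
      π (e p) < π (e q) ↔
        (σ p.1 < σ q.1 ∨ ∃ _ : p.1 = q.1, ((α p.1) p.2 : ℕ) < ((α q.1) q.2 : ℕ)))

/-- `SubstDepthLE π d` holds when the (canonical) substitution decomposition tree of `π`
has height at most `d`: a singleton is a leaf; otherwise `π` decomposes as an inflation of
a nonmonotone simple permutation, as a sum of sum indecomposable permutations, or as a
skew sum of skew indecomposable permutations, with all children of height at most `d-1`. -/
inductive SubstDepthLE : PermOf → ℕ → Prop where
  | leaf (π : PermOf) (d : ℕ) : π.1 = 1 → SubstDepthLE π d
  | inflation (π : PermOf) {m : ℕ} (σ : Equiv.Perm (Fin m)) (k : Fin m → ℕ)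
      (α : ∀ i, Equiv.Perm (Fin (k i))) (d : ℕ) :
      IsSimple σ → ¬ IsMonotonePerm σ → (∀ i, 0 < k i) →
      IsInflation π.2 σ k α → (∀ i, SubstDepthLE ⟨k i, α i⟩ d) → SubstDepthLE π (d + 1)
  | sum (L : List PermOf) (d : ℕ) : 2 ≤ L.length → (∀ τ ∈ L, SumIndecomposable τ) →
      (∀ τ ∈ L, SubstDepthLE τ d) → SubstDepthLE (psumList L) (d + 1)
  | skew (L : List PermOf) (d : ℕ) : 2 ≤ L.length → (∀ τ ∈ L, SkewIndecomposable τ) →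
      (∀ τ ∈ L, SubstDepthLE τ d) → SubstDepthLE (pskewList L) (d + 1)


/-- `π` has a decreasing subsequence of length `D`. -/
def HasDec (π : PermOf) (D : ℕ) : Prop :=
  ∃ T : Finset (Fin π.1), T.card = D ∧ ∀ x ∈ T, ∀ y ∈ T, x < y → π.2 y < π.2 x

/-- `σ` is the pattern of an interval partition of `π`. -/
def Quo {n m : ℕ} (π : Equiv.Perm (Fin n)) (σ : Equiv.Perm (Fin m)) : Prop :=
  ∃ c d : Fin n → Fin m, Monotone c ∧ Function.Surjective c ∧ Monotone d ∧
    Function.Surjective d ∧ ∀ i, σ (c i) = d (π i)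

theorem perm_eq_of_order {n : ℕ} (π ρ : Equiv.Perm (Fin n))
    (h : ∀ i j, π i < π j → ρ i < ρ j) : π = ρ := by
  have hs : StrictMono (fun x => ρ (π.symm x)) := by
    intro x y hxy
    apply h
    simpa using hxy
  have hid : (fun x => ρ (π.symm x)) = id := by
    have := Subsingleton.elim
      (StrictMono.orderIsoOfSurjective _ hs (ρ.surjective.comp π.symm.surjective))
      (OrderIso.refl (Fin n))
    funext x
    exact congrArg (fun f : Fin n ≃o Fin n => f x) this
  ext i
  have := congrFun hid (π i)
  simp at this
  rw [this]

theorem exists_std {n k : ℕ} (g : Fin k → Fin n) (hg : Function.Injective g) :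
    ∃ α : Equiv.Perm (Fin k), ∀ i j, α i < α j ↔ g i < g j := by
  refine ⟨(Tuple.sort g).symm, fun i j => ?_⟩
  have hm : StrictMono (g ∘ Tuple.sort g) :=
    (Tuple.monotone_sort g).strictMono_of_injective (hg.comp (Tuple.sort g).injective)
  have := hm.lt_iff_lt (a := (Tuple.sort g).symm i) (b := (Tuple.sort g).symm j)
  simpa using this.symm

theorem sumPerm_left {m n : ℕ} (σ : Equiv.Perm (Fin m)) (τ : Equiv.Perm (Fin n)) (i : Fin m) :
    sumPerm σ τ (Fin.castAdd n i) = Fin.castAdd n (σ i) := by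
  simp [sumPerm]

theorem sumPerm_right {m n : ℕ} (σ : Equiv.Perm (Fin m)) (τ : Equiv.Perm (Fin n)) (i : Fin n) :
    sumPerm σ τ (Fin.natAdd m i) = Fin.natAdd m (τ i) := by
  simp [sumPerm]

theorem skewPerm_left {m n : ℕ} (σ : Equiv.Perm (Fin m)) (τ : Equiv.Perm (Fin n)) (i : Fin m) :
    ((skewPerm σ τ (Fin.castAdd n i) : Fin (m + n)) : ℕ) = n + σ i := by
  simp [skewPerm, add_comm]

theorem skewPerm_right {m n : ℕ} (σ : Equiv.Perm (Fin m)) (τ : Equiv.Perm (Fin n)) (i : Fin n) :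
    ((skewPerm σ τ (Fin.natAdd m i) : Fin (m + n)) : ℕ) = τ i := by
  simp [skewPerm]

/-- The values of a permutation, on natural numbers. -/
def fval (π : PermOf) (i : ℕ) : ℕ := if h : i < π.1 then π.2 ⟨i, h⟩ else 0

theorem perm_ext (π ρ : PermOf) (h : π.1 = ρ.1) (hv : ∀ i < π.1, fval π i = fval ρ i) :
    π = ρ := by
  obtain ⟨n, π⟩ := π
  obtain ⟨m, ρ⟩ := ρ
  obtain rfl : n = m := h
  congr 1
  ext i
  have := hv i i.2
  simpa [fval] using this

theorem fval_psum_left (a b : PermOf) (i : ℕ) (h : i < a.1) : fval (psum a b) i = fval a i := by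
  have h2 : i < (psum a b).1 := by simp only [psum]; omega
  have := congrArg Fin.val (sumPerm_left a.2 b.2 ⟨i, h⟩)
  simp only [fval, h, h2, dif_pos]
  exact this

theorem fval_psum_right (a b : PermOf) (i : ℕ) (h : i < b.1) :
    fval (psum a b) (a.1 + i) = a.1 + fval b i := by
  have h2 : a.1 + i < (psum a b).1 := by simp only [psum]; omega
  have := congrArg Fin.val (sumPerm_right a.2 b.2 ⟨i, h⟩)
  simp only [fval, h, h2, dif_pos]
  exact this

theorem fval_pskew_left (a b : PermOf) (i : ℕ) (h : i < a.1) :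
    fval (pskew a b) i = b.1 + fval a i := by
  have h2 : i < (pskew a b).1 := by simp only [pskew]; omega
  have := skewPerm_left a.2 b.2 ⟨i, h⟩
  simp only [fval, h, h2, dif_pos]
  exact this

theorem fval_pskew_right (a b : PermOf) (i : ℕ) (h : i < b.1) :
    fval (pskew a b) (a.1 + i) = fval b i := by
  have h2 : a.1 + i < (pskew a b).1 := by simp only [pskew]; omega
  have := skewPerm_right a.2 b.2 ⟨i, h⟩
  simp only [fval, h, h2, dif_pos]
  exact this

theorem psum_fst (a b : PermOf) : (psum a b).1 = a.1 + b.1 := rfl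

theorem pskew_fst (a b : PermOf) : (pskew a b).1 = a.1 + b.1 := rfl

theorem psum_assoc (a b c : PermOf) : psum (psum a b) c = psum a (psum b c) := by
  apply perm_ext
  · simp only [psum_fst]; omega
  intro i hi
  simp only [psum_fst] at hi
  by_cases h1 : i < a.1
  · rw [fval_psum_left _ _ _ (by simp only [psum_fst]; omega), fval_psum_left _ _ _ h1,
      fval_psum_left _ _ _ h1]
  · obtain ⟨j, rfl⟩ := Nat.exists_eq_add_of_le (not_lt.mp h1)
    by_cases h2 : j < b.1
    · rw [fval_psum_left _ _ _ (by simp only [psum_fst]; omega), fval_psum_right _ _ _ h2,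
        fval_psum_right _ _ _ (by simp only [psum_fst]; omega), fval_psum_left _ _ _ h2]
    · obtain ⟨k, rfl⟩ := Nat.exists_eq_add_of_le (not_lt.mp h2)
      have h3 : k < c.1 := by omega
      rw [fval_psum_right a _ _ (by simp only [psum_fst]; omega), fval_psum_right b _ _ h3,
        ← add_assoc, ← psum_fst, fval_psum_right _ _ _ h3, psum_fst]
      omega

theorem pskew_assoc (a b c : PermOf) : pskew (pskew a b) c = pskew a (pskew b c) := by
  apply perm_ext
  · simp only [pskew_fst]; omega
  intro i hi
  simp only [pskew_fst] at hi
  by_cases h1 : i < a.1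
  · rw [fval_pskew_left _ _ _ (by simp only [pskew_fst]; omega), fval_pskew_left _ _ _ h1,
      fval_pskew_left _ _ _ h1, pskew_fst]
    omega
  · obtain ⟨j, rfl⟩ := Nat.exists_eq_add_of_le (not_lt.mp h1)
    by_cases h2 : j < b.1
    · rw [fval_pskew_left _ _ _ (by simp only [pskew_fst]; omega), fval_pskew_right _ _ _ h2,
        fval_pskew_right _ _ _ (by simp only [pskew_fst]; omega), fval_pskew_left _ _ _ h2]
    · obtain ⟨k, rfl⟩ := Nat.exists_eq_add_of_le (not_lt.mp h2)
      have h3 : k < c.1 := by omega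
      rw [fval_pskew_right a _ _ (by simp only [pskew_fst]; omega), fval_pskew_right b _ _ h3,
        ← add_assoc, ← pskew_fst, fval_pskew_right _ _ _ h3]

theorem psum_empty (a : PermOf) : psum a pempty = a := by
  apply perm_ext
  · rfl
  · intro i hi
    exact fval_psum_left _ _ _ hi

theorem pskew_empty (a : PermOf) : pskew a pempty = a := by
  apply perm_ext
  · rfl
  · intro i hi
    rw [fval_pskew_left a pempty i hi]
    simp [pempty]

theorem empty_psum (a : PermOf) : psum pempty a = a := by
  apply perm_ext
  · simp [psum_fst, pempty]
  · intro i hi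
    have := fval_psum_right pempty a i (by simpa [psum_fst, pempty] using hi)
    simpa [pempty] using this

theorem empty_pskew (a : PermOf) : pskew pempty a = a := by
  apply perm_ext
  · simp [pskew_fst, pempty]
  · intro i hi
    have := fval_pskew_right pempty a i (by simpa [pskew_fst, pempty] using hi)
    simpa [pempty] using this

theorem psumList_append (L M : List PermOf) :
    psumList (L ++ M) = psum (psumList L) (psumList M) := by
  induction L with
  | nil => exact (empty_psum _).symm
  | cons a L ih =>
    change psum a (psumList (L ++ M)) = psum (psum a (psumList L)) _
    rw [ih, psum_assoc]

theorem pskewList_append (L M : List PermOf) :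
    pskewList (L ++ M) = pskew (pskewList L) (pskewList M) := by
  induction L with
  | nil => exact (empty_pskew _).symm
  | cons a L ih =>
    change pskew a (pskewList (L ++ M)) = pskew (pskew a (pskewList L)) _
    rw [ih, pskew_assoc]

theorem exists_sumList (n : ℕ) : ∀ π : PermOf, π.1 = n → 0 < n →
    ∃ L : List PermOf, 1 ≤ L.length ∧ (∀ τ ∈ L, SumIndecomposable τ) ∧ psumList L = π := by
  induction n using Nat.strong_induction_on with
  | _ n ih =>
    intro π hn h0
    by_cases h : SumDecomposable π
    · obtain ⟨a, b, ha, hb, rfl⟩ := h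
      rw [psum_fst] at hn
      obtain ⟨L, hL, hL1, hL2⟩ := ih a.1 (by omega) a rfl ha
      obtain ⟨M, hM, hM1, hM2⟩ := ih b.1 (by omega) b rfl hb
      refine ⟨L ++ M, by simp; omega, ?_, by rw [psumList_append, hL2, hM2]⟩
      intro τ hτ
      rcases List.mem_append.mp hτ with h | h
      · exact hL1 _ h
      · exact hM1 _ h
    · exact ⟨[π], by simp, by simpa using ⟨hn ▸ h0, h⟩, psum_empty π⟩

theorem exists_skewList (n : ℕ) : ∀ π : PermOf, π.1 = n → 0 < n →
    ∃ L : List PermOf, 1 ≤ L.length ∧ (∀ τ ∈ L, SkewIndecomposable τ) ∧ pskewList L = π := by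
  induction n using Nat.strong_induction_on with
  | _ n ih =>
    intro π hn h0
    by_cases h : SkewDecomposable π
    · obtain ⟨a, b, ha, hb, rfl⟩ := h
      rw [pskew_fst] at hn
      obtain ⟨L, hL, hL1, hL2⟩ := ih a.1 (by omega) a rfl ha
      obtain ⟨M, hM, hM1, hM2⟩ := ih b.1 (by omega) b rfl hb
      refine ⟨L ++ M, by simp; omega, ?_, by rw [pskewList_append, hL2, hM2]⟩
      intro τ hτ
      rcases List.mem_append.mp hτ with h | h
      · exact hL1 _ h
      · exact hM1 _ h
    · exact ⟨[π], by simp, by simpa using ⟨hn ▸ h0, h⟩, pskew_empty π⟩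

theorem sumList_of_dec (π : PermOf) (h : SumDecomposable π) :
    ∃ L : List PermOf, 2 ≤ L.length ∧ (∀ τ ∈ L, SumIndecomposable τ) ∧ psumList L = π := by
  obtain ⟨L, hL, hL1, hL2⟩ := exists_sumList π.1 π rfl (by
    obtain ⟨a, b, ha, hb, rfl⟩ := h
    rw [psum_fst]; omega)
  refine ⟨L, ?_, hL1, hL2⟩
  match L, hL, hL1, hL2 with
  | [a], _, h1, h2 =>
    have h3 : a = π := (psum_empty a).symm.trans h2
    exact absurd h (h3 ▸ (h1 a (by simp)).2)
  | a :: b :: L, _, _, _ => simp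

theorem skewList_of_dec (π : PermOf) (h : SkewDecomposable π) :
    ∃ L : List PermOf, 2 ≤ L.length ∧ (∀ τ ∈ L, SkewIndecomposable τ) ∧ pskewList L = π := by
  obtain ⟨L, hL, hL1, hL2⟩ := exists_skewList π.1 π rfl (by
    obtain ⟨a, b, ha, hb, rfl⟩ := h
    rw [pskew_fst]; omega)
  refine ⟨L, ?_, hL1, hL2⟩
  match L, hL, hL1, hL2 with
  | [a], _, h1, h2 =>
    have h3 : a = π := (pskew_empty a).symm.trans h2
    exact absurd h (h3 ▸ (h1 a (by simp)).2)
  | a :: b :: L, _, _, _ => simp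

/-! Decreasing subsequences. -/

theorem hasDec_zero (π : PermOf) : HasDec π 0 := ⟨∅, by simp, by simp⟩

theorem hasDec_one (π : PermOf) (h : 0 < π.1) : HasDec π 1 :=
  ⟨{⟨0, h⟩}, by simp, by simp⟩

theorem hasDec_psum_left (a b : PermOf) (D : ℕ) (h : HasDec a D) : HasDec (psum a b) D := by
  obtain ⟨T, hT, hd⟩ := h
  refine ⟨T.map (Fin.castAddEmb b.1), (Finset.card_map _).trans hT, ?_⟩
  intro x hx y hy hxy
  obtain ⟨x, hx2, rfl⟩ := Finset.mem_map.mp hx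
  obtain ⟨y, hy2, rfl⟩ := Finset.mem_map.mp hy
  have := hd x hx2 y hy2 hxy
  change sumPerm a.2 b.2 (Fin.castAdd _ y) < sumPerm a.2 b.2 (Fin.castAdd _ x)
  rw [sumPerm_left, sumPerm_left]
  exact this

theorem hasDec_psum_right (a b : PermOf) (D : ℕ) (h : HasDec b D) : HasDec (psum a b) D := by
  obtain ⟨T, hT, hd⟩ := h
  refine ⟨T.map (Fin.natAddEmb a.1), (Finset.card_map _).trans hT, ?_⟩
  intro x hx y hy hxy
  obtain ⟨x, hx2, rfl⟩ := Finset.mem_map.mp hx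
  obtain ⟨y, hy2, rfl⟩ := Finset.mem_map.mp hy
  have hxy' : x < y := by
    have h1 : a.1 + (x : ℕ) < a.1 + y := hxy
    exact Fin.lt_def.mpr (by omega)
  have := hd x hx2 y hy2 hxy'
  change sumPerm a.2 b.2 (Fin.natAdd _ y) < sumPerm a.2 b.2 (Fin.natAdd _ x)
  rw [sumPerm_right, sumPerm_right]
  simpa using this

theorem hasDec_pskew (a b : PermOf) (D E : ℕ) (h : HasDec a D) (h' : HasDec b E) :
    HasDec (pskew a b) (D + E) := by
  obtain ⟨T, hT, hd⟩ := h
  obtain ⟨U, hU, he⟩ := h'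
  let T' : Finset (Fin (a.1 + b.1)) := T.map (Fin.castAddEmb b.1)
  let U' : Finset (Fin (a.1 + b.1)) := U.map (Fin.natAddEmb a.1)
  have hmT : ∀ x ∈ T', ∃ z ∈ T, x = Fin.castAdd _ z := by
    intro x hx
    obtain ⟨z, hz, rfl⟩ := Finset.mem_map.mp hx
    exact ⟨z, hz, rfl⟩
  have hmU : ∀ x ∈ U', ∃ z ∈ U, x = Fin.natAdd _ z := by
    intro x hx
    obtain ⟨z, hz, rfl⟩ := Finset.mem_map.mp hx
    exact ⟨z, hz, rfl⟩
  refine ⟨(T' ∪ U' : Finset (Fin (a.1 + b.1))), ?_, ?_⟩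
  · change (T' ∪ U' : Finset (Fin (a.1 + b.1))).card = D + E
    rw [Finset.card_union_of_disjoint]
    · simp [T', U', hT, hU]
    · rw [Finset.disjoint_left]
      intro x hx hx'
      obtain ⟨z, _, rfl⟩ := hmT x hx
      obtain ⟨w, _, hw⟩ := hmU _ hx'
      have := congrArg Fin.val hw
      simp at this
      omega
  · intro x hx y hy hxy
    change skewPerm a.2 b.2 y < skewPerm a.2 b.2 x
    rw [Fin.lt_def]
    have hxy : (x : ℕ) < y := hxy
    rcases Finset.mem_union.mp hx with hx1 | hx1 <;> rcases Finset.mem_union.mp hy with hy1 | hy1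
    · obtain ⟨x, hx2, rfl⟩ := hmT _ hx1
      obtain ⟨y, hy2, rfl⟩ := hmT _ hy1
      rw [skewPerm_left, skewPerm_left]
      have : ((a.2 y : Fin _) : ℕ) < a.2 x := hd x hx2 y hy2 hxy
      omega
    · obtain ⟨x, hx2, rfl⟩ := hmT _ hx1
      obtain ⟨y, hy2, rfl⟩ := hmU _ hy1
      rw [skewPerm_left, skewPerm_right]
      omega
    · obtain ⟨x, hx2, rfl⟩ := hmU _ hx1
      obtain ⟨y, hy2, rfl⟩ := hmT _ hy1
      simp at hxy
      omega
    · obtain ⟨x, hx2, rfl⟩ := hmU _ hx1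
      obtain ⟨y, hy2, rfl⟩ := hmU _ hy1
      rw [skewPerm_right, skewPerm_right]
      simp only [Fin.val_natAdd] at hxy
      exact he x hx2 y hy2 (Fin.lt_def.mpr (by omega))

theorem hasDec_psumList (L : List PermOf) (τ : PermOf) (hτ : τ ∈ L) (D : ℕ) (h : HasDec τ D) :
    HasDec (psumList L) D := by
  induction L with
  | nil => simp at hτ
  | cons a L ih =>
    change HasDec (psum a (psumList L)) D
    rcases List.mem_cons.mp hτ with rfl | h1
    · exact hasDec_psum_left _ _ _ h
    · exact hasDec_psum_right _ _ _ (ih h1)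

theorem hasDec_pskewList (L : List PermOf) (τ : PermOf) (hτ : τ ∈ L) (D : ℕ) (h : HasDec τ D) :
    HasDec (pskewList L) D := by
  induction L with
  | nil => simp at hτ
  | cons a L ih =>
    change HasDec (pskew a (pskewList L)) D
    rcases List.mem_cons.mp hτ with rfl | h1
    · exact hasDec_pskew _ _ D 0 h (hasDec_zero _)
    · simpa using hasDec_pskew _ _ 0 D (hasDec_zero a) (ih h1)

theorem hasDec_pskewList_succ (L : List PermOf) (h2 : 2 ≤ L.length) (hp : ∀ τ ∈ L, 0 < τ.1)
    (τ : PermOf) (hτ : τ ∈ L) (D : ℕ) (h : HasDec τ D) : HasDec (pskewList L) (D + 1) := by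
  match L, h2, hp, hτ with
  | a :: b :: L, _, hp, hτ =>
    change HasDec (pskew a (pskewList (b :: L))) (D + 1)
    rcases List.mem_cons.mp hτ with rfl | h1
    · exact hasDec_pskew _ _ _ _ h
        (hasDec_pskewList _ b (by simp) _ (hasDec_one b (hp b (by simp))))
    · rw [add_comm]
      exact hasDec_pskew _ _ _ _ (hasDec_one a (hp a (by simp))) (hasDec_pskewList _ _ h1 _ h)

/-! Cuts. -/

theorem sumDecomposable_of_cut {n : ℕ} (π : Equiv.Perm (Fin n)) (p : Fin n) (hp : 0 < (p : ℕ))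
    (h : ∀ i j, i < p → p ≤ j → π i < π j) : SumDecomposable ⟨n, π⟩ := by
  obtain ⟨q, hq⟩ := Nat.exists_eq_add_of_lt p.2
  obtain ⟨p, hpn⟩ := p
  simp only at hq hp
  rw [add_assoc] at hq
  subst hq
  obtain ⟨α, hα⟩ := exists_std (fun i : Fin p => π (Fin.castAdd (q + 1) i))
    (π.injective.comp (Fin.castAdd_injective _ _))
  obtain ⟨β, hβ⟩ := exists_std (fun i : Fin (q + 1) => π (Fin.natAdd p i))
    (π.injective.comp (Fin.natAdd_injective _ _))
  refine ⟨⟨p, α⟩, ⟨q + 1, β⟩, hp, Nat.succ_pos _, ?_⟩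
  change (⟨p + (q + 1), π⟩ : PermOf) = ⟨p + (q + 1), sumPerm α β⟩
  congr 1
  symm
  apply perm_eq_of_order
  intro i j
  refine Fin.addCases (fun i => ?_) (fun i => ?_) i <;>
    refine Fin.addCases (fun j => ?_) (fun j => ?_) j
  · rw [sumPerm_left, sumPerm_left]
    exact fun hh => (hα i j).mp hh
  · intro _
    exact h _ _ (by simp [Fin.lt_def]) (by simp [Fin.le_def])
  · rw [sumPerm_left, sumPerm_right, Fin.lt_def]
    simp
    omega
  · rw [sumPerm_right, sumPerm_right]
    exact fun hh => (hβ i j).mp (by simpa using hh)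

theorem skewDecomposable_of_cut {n : ℕ} (π : Equiv.Perm (Fin n)) (p : Fin n) (hp : 0 < (p : ℕ))
    (h : ∀ i j, i < p → p ≤ j → π j < π i) : SkewDecomposable ⟨n, π⟩ := by
  obtain ⟨q, hq⟩ := Nat.exists_eq_add_of_lt p.2
  obtain ⟨p, hpn⟩ := p
  simp only at hq hp
  rw [add_assoc] at hq
  subst hq
  obtain ⟨α, hα⟩ := exists_std (fun i : Fin p => π (Fin.castAdd (q + 1) i))
    (π.injective.comp (Fin.castAdd_injective _ _))
  obtain ⟨β, hβ⟩ := exists_std (fun i : Fin (q + 1) => π (Fin.natAdd p i))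
    (π.injective.comp (Fin.natAdd_injective _ _))
  refine ⟨⟨p, α⟩, ⟨q + 1, β⟩, hp, Nat.succ_pos _, ?_⟩
  change (⟨p + (q + 1), π⟩ : PermOf) = ⟨p + (q + 1), skewPerm α β⟩
  congr 1
  symm
  apply perm_eq_of_order
  intro i j
  refine Fin.addCases (fun i => ?_) (fun i => ?_) i <;>
    refine Fin.addCases (fun j => ?_) (fun j => ?_) j
  · rw [Fin.lt_def, skewPerm_left, skewPerm_left]
    exact fun hh => (hα i j).mp (Fin.lt_def.mpr (by omega))
  · rw [Fin.lt_def, skewPerm_left, skewPerm_right]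
    omega
  · intro _
    exact h _ _ (by simp [Fin.lt_def]) (by simp [Fin.le_def])
  · rw [Fin.lt_def, skewPerm_right, skewPerm_right]
    exact fun hh => (hβ i j).mp hh

theorem exists_first {n m : ℕ} (c : Fin n → Fin m) (hc : Monotone c)
    (hs : Function.Surjective c) (p : Fin m) (hp : 0 < (p : ℕ)) :
    ∃ x : Fin n, 0 < (x : ℕ) ∧ (∀ i, i < x → c i < p) ∧ (∀ j, x ≤ j → p ≤ c j) := by
  let S : Finset (Fin n) := Finset.univ.filter (fun x => p ≤ c x)
  have hS : S.Nonempty := by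
    obtain ⟨y, hy⟩ := hs p
    exact ⟨y, by simp [S, hy]⟩
  have hm : p ≤ c (S.min' hS) := by
    have := S.min'_mem hS
    simpa [S] using this
  refine ⟨S.min' hS, ?_, ?_, ?_⟩
  · obtain ⟨y, hy⟩ := hs ⟨0, by omega⟩
    by_contra h0
    have h1 : S.min' hS ≤ y := Fin.le_def.mpr (by omega)
    have h2 := hm.trans (hc h1)
    rw [hy, Fin.le_def] at h2
    simp at h2
    omega
  · intro i hi
    by_contra h
    have : i ∈ S := by simpa [S] using h
    exact absurd (S.min'_le i this) (not_le.mpr hi)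
  · intro j hj
    exact hm.trans (hc hj)

theorem quo_sum {n m : ℕ} {π : Equiv.Perm (Fin n)} {σ : Equiv.Perm (Fin m)} (hq : Quo π σ)
    (p : Fin m) (hp : 0 < (p : ℕ)) (h : ∀ i j, i < p → p ≤ j → σ i < σ j) :
    SumDecomposable ⟨n, π⟩ := by
  obtain ⟨c, d, hc, hcs, hd, hds, he⟩ := hq
  obtain ⟨x, hx, h1, h2⟩ := exists_first c hc hcs p hp
  refine sumDecomposable_of_cut π x hx fun i j hi hj => ?_
  have := h _ _ (h1 i hi) (h2 j hj)
  rw [he, he] at this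
  exact hd.reflect_lt this

theorem quo_skew {n m : ℕ} {π : Equiv.Perm (Fin n)} {σ : Equiv.Perm (Fin m)} (hq : Quo π σ)
    (p : Fin m) (hp : 0 < (p : ℕ)) (h : ∀ i j, i < p → p ≤ j → σ j < σ i) :
    SkewDecomposable ⟨n, π⟩ := by
  obtain ⟨c, d, hc, hcs, hd, hds, he⟩ := hq
  obtain ⟨x, hx, h1, h2⟩ := exists_first c hc hcs p hp
  refine skewDecomposable_of_cut π x hx fun i j hi hj => ?_
  have := h _ _ (h1 i hi) (h2 j hj)
  rw [he, he] at this
  exact hd.reflect_lt this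

/-! Quotients. -/

theorem contiguous_eq {m : ℕ} (S : Finset (Fin m)) (hS : Contiguous S) (hn : S.Nonempty) :
    ∃ a : ℕ, a + S.card ≤ m ∧ ∀ x : Fin m, x ∈ S ↔ a ≤ (x : ℕ) ∧ (x : ℕ) < a + S.card := by
  have h1 : S = Finset.Icc (S.min' hn) (S.max' hn) := by
    ext x
    rw [Finset.mem_Icc]
    exact ⟨fun h => ⟨S.min'_le x h, S.le_max' x h⟩,
      fun h => hS _ _ _ (S.min'_mem hn) (S.max'_mem hn) h.1 h.2⟩
  have hle : S.min' hn ≤ S.max' hn := S.min'_le _ (S.max'_mem hn)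
  have hle' : ((S.min' hn : Fin m) : ℕ) ≤ (S.max' hn : Fin m) := hle
  have h2 : S.card = (S.max' hn : ℕ) + 1 - (S.min' hn : ℕ) := by
    conv_lhs => rw [h1]
    simp
  have h3 := (S.max' hn).2
  refine ⟨(S.min' hn : ℕ), by omega, fun x => ?_⟩
  conv_lhs => rw [h1]
  rw [Finset.mem_Icc, Fin.le_def, Fin.le_def]
  omega

theorem contract {m s : ℕ} (S : Finset (Fin m)) (hS : Contiguous S) (hs : S.card = s + 1) :
    ∃ c : Fin m → Fin (m - s), Monotone c ∧ Function.Surjective c ∧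
      ∀ x y, c x = c y ↔ (x = y ∨ (x ∈ S ∧ y ∈ S)) := by
  obtain ⟨a, ha, hm⟩ := contiguous_eq S hS (Finset.card_pos.mp (by omega))
  rw [hs] at ha hm
  refine ⟨fun x => ⟨max (min x a) (x - s), by have := x.2; omega⟩, ?_, ?_, ?_⟩
  · intro x y hxy
    rw [Fin.le_def] at hxy ⊢
    simp only
    omega
  · intro y
    have hy := y.2
    by_cases h : (y : ℕ) ≤ a
    · refine ⟨⟨y, by omega⟩, ?_⟩
      ext
      simp only
      omega
    · refine ⟨⟨y + s, by omega⟩, ?_⟩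
      ext
      simp only
      omega
  · intro x y
    rw [hm, hm, Fin.ext_iff, Fin.ext_iff]
    simp only
    omega

theorem quo_trans {n m k : ℕ} {π : Equiv.Perm (Fin n)} {σ : Equiv.Perm (Fin m)}
    {τ : Equiv.Perm (Fin k)} (h : Quo π σ) (h' : Quo σ τ) : Quo π τ := by
  obtain ⟨c, d, hc, hcs, hd, hds, he⟩ := h
  obtain ⟨c', d', hc', hcs', hd', hds', he'⟩ := h'
  exact ⟨c' ∘ c, d' ∘ d, hc'.comp hc, hcs'.comp hcs, hd'.comp hd, hds'.comp hds,
    fun i => by simp [he', he]⟩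

theorem quo_of_not_simple {m : ℕ} (σ : Equiv.Perm (Fin m)) (h : ¬ IsSimple σ) :
    ∃ k, 2 ≤ k ∧ k < m ∧ ∃ τ : Equiv.Perm (Fin k), Quo σ τ := by
  unfold IsSimple at h
  push Not at h
  obtain ⟨S, hS, h0, h1, h2⟩ := h
  have hle : S.card ≤ m := by simpa using S.card_le_univ
  obtain ⟨s, hs⟩ : ∃ s, S.card = s + 1 := ⟨S.card - 1, by omega⟩
  obtain ⟨c, hc, hcs, hce⟩ := contract S hS.1 hs
  obtain ⟨d, hd, hds, hde⟩ := contract (S.image σ) hS.2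
    (by rw [Finset.card_image_of_injective _ σ.injective, hs])
  have hcd : ∀ x y, c x = c y ↔ d (σ x) = d (σ y) := by
    intro x y
    rw [hce, hde]
    simp
  let t : Fin (m - s) → Fin (m - s) := fun y => d (σ (Function.surjInv hcs y))
  have ht : ∀ x, t (c x) = d (σ x) := fun x =>
    (hcd _ _).mp (Function.surjInv_eq hcs (c x))
  have hts : Function.Surjective t := by
    intro y
    obtain ⟨z, rfl⟩ := hds y
    exact ⟨c (σ.symm z), by rw [ht]; simp⟩
  refine ⟨m - s, by omega, by omega,
    Equiv.ofBijective t ⟨Finite.injective_iff_surjective.mpr hts, hts⟩,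
    c, d, hc, hcs, hd, hds, ht⟩

theorem quo_refl {n : ℕ} (π : Equiv.Perm (Fin n)) : Quo π π :=
  ⟨id, id, monotone_id, Function.surjective_id, monotone_id, Function.surjective_id, fun _ => rfl⟩

theorem exists_simple_quo {n : ℕ} (π : Equiv.Perm (Fin n)) (m : ℕ) :
    ∀ σ : Equiv.Perm (Fin m), 2 ≤ m → Quo π σ →
      ∃ k, 2 ≤ k ∧ ∃ τ : Equiv.Perm (Fin k), Quo π τ ∧ IsSimple τ := by
  induction m using Nat.strong_induction_on with
  | _ m ih =>
    intro σ hm hq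
    by_cases h : IsSimple σ
    · exact ⟨m, hm, σ, hq, h⟩
    · obtain ⟨k, hk, hkm, τ, hτ⟩ := quo_of_not_simple σ h
      exact ih k hkm τ hk (quo_trans hq hτ)

theorem inflation_of_quo {n m : ℕ} {π : Equiv.Perm (Fin n)} {σ : Equiv.Perm (Fin m)}
    (hq : Quo π σ) (D : ℕ) (hD : ¬ HasDec ⟨n, π⟩ (D + 1))
    (hinv : ∀ i, ∃ j, (j < i ∧ σ i < σ j) ∨ (i < j ∧ σ j < σ i)) :
    ∃ (k : Fin m → ℕ) (α : ∀ i, Equiv.Perm (Fin (k i))), (∀ i, 0 < k i) ∧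
      IsInflation π σ k α ∧ ∀ i, ¬ HasDec ⟨k i, α i⟩ D := by
  obtain ⟨c, d, hc, hcs, hd, hds, he⟩ := hq
  let F : Fin m → Finset (Fin n) := fun i => Finset.univ.filter (fun x => c x = i)
  let k : Fin m → ℕ := fun i => (F i).card
  let f : ∀ i, Fin (k i) ↪o Fin n := fun i => (F i).orderEmbOfFin rfl
  have hf : ∀ i p, c (f i p) = i := by
    intro i p
    have : f i p ∈ F i := (F i).orderEmbOfFin_mem rfl p
    exact (Finset.mem_filter.mp this).2
  have hfs : ∀ x, ∃ p, f (c x) p = x := by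
    intro x
    have h1 : x ∈ F (c x) := by simp [F]
    have := (F (c x)).range_orderEmbOfFin rfl
    have h2 : x ∈ Set.range ((F (c x)).orderEmbOfFin rfl) := by rw [this]; exact h1
    exact h2
  choose α hα using fun i => exists_std (fun p => π (f i p)) (π.injective.comp (f i).injective)
  have hcl : ∀ x y, c x < c y → x < y := fun x y h => hc.reflect_lt h
  have hdl : ∀ x y, σ (c x) < σ (c y) → π x < π y := by
    intro x y h
    rw [he, he] at h
    exact hd.reflect_lt h
  refine ⟨k, α, ?_, ?_, ?_⟩
  · intro i
    obtain ⟨x, rfl⟩ := hcs i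
    obtain ⟨p, _⟩ := hfs x
    exact p.pos
  · let g : (Σ i : Fin m, Fin (k i)) → Fin n := fun p => f p.1 p.2
    have hg : Function.Bijective g := by
      constructor
      · rintro ⟨i, p⟩ ⟨j, q⟩ h
        have h1 : i = j := by
          have := congrArg c h
          simpa [g, hf] using this
        subst h1
        have : p = q := (f i).injective h
        rw [this]
      · intro x
        obtain ⟨p, hp⟩ := hfs x
        exact ⟨⟨c x, p⟩, hp⟩
    refine ⟨Equiv.ofBijective g hg, ?_, ?_⟩
    · rintro ⟨i, p⟩ ⟨j, q⟩
      simp only [Equiv.ofBijective_apply, g]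
      rcases lt_trichotomy i j with h | h | h
      · simp only [h, true_or, iff_true]
        exact hcl _ _ (by rw [hf, hf]; exact h)
      · subst h
        simp
      · have h1 : f j q < f i p := hcl _ _ (by rw [hf, hf]; exact h)
        simp [h1.not_gt, h.not_gt, h.ne']
    · rintro ⟨i, p⟩ ⟨j, q⟩
      simp only [Equiv.ofBijective_apply, g]
      by_cases hij : i = j
      · subst hij
        have := hα i p q
        simp only [← this]
        simp
      · have hne : σ i ≠ σ j := fun h => hij (σ.injective h)
        rcases lt_or_gt_of_ne hne with h | h
        · simp only [h, true_or, iff_true]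
          exact hdl _ _ (by rw [hf, hf]; exact h)
        · have h1 : π (f j q) < π (f i p) := hdl _ _ (by rw [hf, hf]; exact h)
          simp [h1.not_gt, h.not_gt, hij]
  · intro i hdec
    apply hD
    obtain ⟨T, hT, hTd⟩ := hdec
    obtain ⟨j, hj⟩ := hinv i
    obtain ⟨y, rfl⟩ := hcs j
    let T' : Finset (Fin n) := T.map (f i).toEmbedding
    have hmem : ∀ x ∈ T', ∃ p ∈ T, x = f i p := by
      intro x hx
      obtain ⟨p, hp, rfl⟩ := Finset.mem_map.mp hx
      exact ⟨p, hp, rfl⟩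
    have hy : y ∉ T' := by
      intro h
      obtain ⟨p, _, rfl⟩ := hmem _ h
      rw [hf] at hj
      simp at hj
    refine ⟨insert y T', ?_, ?_⟩
    · rw [Finset.card_insert_of_notMem hy]
      simp [T', hT]
    · intro x hx z hz hxz
      change π z < π x
      change x < z at hxz
      rcases Finset.mem_insert.mp hx with rfl | hx1 <;>
        rcases Finset.mem_insert.mp hz with rfl | hz1
      · exact absurd hxz (lt_irrefl _)
      · obtain ⟨p, hp, rfl⟩ := hmem _ hz1
        rcases hj with hj | hj
        · exact hdl _ _ (by rw [hf]; exact hj.2)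
        · exact absurd (hcl (f i p) x (by rw [hf]; exact hj.1)) (not_lt.mpr hxz.le)
      · obtain ⟨p, hp, rfl⟩ := hmem _ hx1
        rcases hj with hj | hj
        · exact absurd (hcl z (f i p) (by rw [hf]; exact hj.1)) (not_lt.mpr hxz.le)
        · exact hdl _ _ (by rw [hf]; exact hj.2)
      · obtain ⟨p, hp, rfl⟩ := hmem _ hx1
        obtain ⟨q, hq, rfl⟩ := hmem _ hz1
        exact (hα i q p).mp (hTd p hp q hq (by simpa using hxz))

theorem indecomposable_case (π : PermOf) (h2 : 2 ≤ π.1) (hs : ¬ SumDecomposable π)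
    (hk : ¬ SkewDecomposable π) (D : ℕ) (hD : ¬ HasDec π (D + 1)) :
    ∃ (m : ℕ) (σ : Equiv.Perm (Fin m)) (k : Fin m → ℕ) (α : ∀ i, Equiv.Perm (Fin (k i))),
      0 < m ∧ IsSimple σ ∧ ¬ IsMonotonePerm σ ∧ (∀ i, 0 < k i) ∧ IsInflation π.2 σ k α ∧
      ∀ i, ¬ HasDec ⟨k i, α i⟩ D := by
  obtain ⟨n, π⟩ := π
  obtain ⟨m, hm, σ, hq, hsimp⟩ := exists_simple_quo π n π h2 (quo_refl π)
  have hinv : ∀ i, ∃ j, (j < i ∧ σ i < σ j) ∨ (i < j ∧ σ j < σ i) := by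
    intro i
    by_contra hno
    push Not at hno
    by_cases hi : 0 < (i : ℕ)
    · refine hs (quo_sum hq i hi fun a b ha hb => ?_)
      have h1 : σ a < σ i := lt_of_le_of_ne ((hno a).1 ha) (fun h => ha.ne (σ.injective h))
      rcases hb.eq_or_lt with rfl | hb
      · exact h1
      · exact h1.trans_le ((hno b).2 hb)
    · refine hs (quo_sum hq ⟨1, by omega⟩ (by simp) fun a b ha hb => ?_)
      rw [Fin.lt_def] at ha
      rw [Fin.le_def] at hb
      simp only at ha hb
      have hai : a = i := Fin.ext (by omega)
      have hib : i < b := Fin.lt_def.mpr (by omega)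
      rw [hai]
      exact lt_of_le_of_ne ((hno b).2 hib) (fun h => hib.ne (σ.injective h))
  obtain ⟨k, α, hkp, hinf, hch⟩ := inflation_of_quo hq D hD hinv
  refine ⟨m, σ, k, α, by omega, hsimp, ?_, hkp, hinf, hch⟩
  rintro (h | h)
  · refine hs (quo_sum hq ⟨1, by omega⟩ (by simp) fun a b ha hb => ?_)
    have hab := ha.trans_le hb
    exact lt_of_le_of_ne (h a b hab.le) (fun h => hab.ne (σ.injective h))
  · refine hk (quo_skew hq ⟨1, by omega⟩ (by simp) fun a b ha hb => ?_)
    have hab := ha.trans_le hb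
    exact lt_of_le_of_ne (h a b hab.le) (fun h => hab.ne (σ.injective h).symm)

theorem substDepth_mono {π : PermOf} {d : ℕ} (h : SubstDepthLE π d) :
    ∀ e, d ≤ e → SubstDepthLE π e := by
  induction h with
  | leaf π d h => exact fun e _ => .leaf π e h
  | inflation π σ k α d h1 h2 h3 h4 _ ih =>
    intro e he
    obtain ⟨e, rfl⟩ : ∃ e', e = e' + 1 := ⟨e - 1, by omega⟩
    exact .inflation π σ k α e h1 h2 h3 h4 fun i => ih i e (by omega)
  | sum L d h1 h2 _ ih =>
    intro e he
    obtain ⟨e, rfl⟩ : ∃ e', e = e' + 1 := ⟨e - 1, by omega⟩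
    exact .sum L e h1 h2 fun τ hτ => ih τ hτ e (by omega)
  | skew L d h1 h2 _ ih =>
    intro e he
    obtain ⟨e, rfl⟩ : ∃ e', e = e' + 1 := ⟨e - 1, by omega⟩
    exact .skew L e h1 h2 fun τ hτ => ih τ hτ e (by omega)

theorem step_sumIndec (D : ℕ)
    (ih : ∀ π : PermOf, 0 < π.1 → ¬ HasDec π (D + 1) → SubstDepthLE π (2 * D - 1))
    (π : PermOf) (hπ : SumIndecomposable π) (hD : ¬ HasDec π (D + 2)) :
    SubstDepthLE π (2 * D) := by
  by_cases h1 : π.1 = 1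
  · exact .leaf π _ h1
  have h2 : 2 ≤ π.1 := by have := hπ.1; omega
  by_cases hk : SkewDecomposable π
  · obtain ⟨L, hL, hLi, rfl⟩ := skewList_of_dec π hk
    have hch : ∀ τ ∈ L, ¬ HasDec τ (D + 1) := fun τ hτ h =>
      hD (hasDec_pskewList_succ L hL (fun τ hτ => (hLi τ hτ).1) τ hτ _ h)
    have hD0 : 0 < D := by
      rcases Nat.eq_zero_or_pos D with rfl | h
      · obtain ⟨a, ha⟩ := List.exists_mem_of_length_pos (l := L) (by omega)
        exact absurd (hasDec_one a (hLi a ha).1) (hch a ha)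
      · exact h
    have := SubstDepthLE.skew L (2 * D - 1) hL hLi fun τ hτ => ih τ (hLi τ hτ).1 (hch τ hτ)
    rwa [show 2 * D - 1 + 1 = 2 * D by omega] at this
  · obtain ⟨m, σ, k, α, hm, hs, hnm, hkp, hinf, hch⟩ :=
      indecomposable_case π h2 hπ.2 hk (D + 1) hD
    have hD0 : 0 < D := by
      rcases Nat.eq_zero_or_pos D with rfl | h
      · exact absurd (hasDec_one ⟨_, α ⟨0, hm⟩⟩ (hkp _)) (hch ⟨0, hm⟩)
      · exact h
    have := SubstDepthLE.inflation π σ k α (2 * D - 1) hs hnm hkp hinf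
      fun i => ih _ (hkp i) (hch i)
    rwa [show 2 * D - 1 + 1 = 2 * D by omega] at this

theorem depth_main (D : ℕ) :
    ∀ π : PermOf, 0 < π.1 → ¬ HasDec π (D + 1) → SubstDepthLE π (2 * D - 1) := by
  induction D with
  | zero => exact fun π hπ h => absurd (hasDec_one π hπ) h
  | succ D ih =>
    intro π hπ hD
    rw [show 2 * (D + 1) - 1 = 2 * D + 1 by omega]
    by_cases hs : SumDecomposable π
    · obtain ⟨L, hL, hLi, rfl⟩ := sumList_of_dec π hs
      exact .sum L (2 * D) hL hLi fun τ hτ => step_sumIndec D ih τ (hLi τ hτ)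
        fun h => hD (hasDec_psumList L τ hτ _ h)
    · exact substDepth_mono (step_sumIndec D ih π ⟨hπ, hs⟩ hD) _ (by omega)

/-- Every nonempty permutation avoiding the decreasing pattern `ℓ⋯21` (`ℓ ≥ 2`) has
substitution depth at most `2ℓ - 3`. -/
theorem substDepth_le_of_avoids_decreasing {ℓ : ℕ} (hℓ : 2 ≤ ℓ) (π : PermOf)
    (hπ : 0 < π.1) (hav : ¬ Contains (Fin.revPerm : Equiv.Perm (Fin ℓ)) π.2) :
    SubstDepthLE π (2 * ℓ - 3) := by
  have h : ¬ HasDec π (ℓ - 1 + 1) := by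
    rw [show ℓ - 1 + 1 = ℓ by omega]
    rintro ⟨T, hT, hd⟩
    apply hav
    refine ⟨T.orderEmbOfFin hT, (T.orderEmbOfFin hT).strictMono, fun i j => ?_⟩
    have hanti : StrictAnti (fun i => π.2 (T.orderEmbOfFin hT i)) := fun i j hij =>
      hd _ (T.orderEmbOfFin_mem hT i) _ (T.orderEmbOfFin_mem hT j)
        ((T.orderEmbOfFin hT).strictMono hij)
    have := hanti.lt_iff_gt (a := i) (b := j)
    rw [this]
    simp
  have := depth_main (ℓ - 1) π hπ h
  rwa [show 2 * (ℓ - 1) - 1 = 2 * ℓ - 3 by omega] at this
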